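/- arXiv:2210.07987 — 6 statements merged into one kernel-verified Lean document; each statement's English description precedes it below -/
import Mathlib

section
/- For every integer d ≥ 1, every q > 0, every μ ∈ ℝ^d and every symmetric positive definite matrix C ∈ ℝ^{d×d}, the function p(u) = (q/2) (2π)^{−d/2} det(C)^{−1/2} · r(u)^{(q/2−1)(d/2)} · exp{−(1/2) r(u)^{q/2}}, where r(u) = (u−μ)ᵀ C^{−1} (u−μ), integrates to 1 over ℝ^d, i.e. the multivariate q-exponential density is a genuine probability density function. -/
open Real MeasureTheory Matrix

lemma qED_radial (d : ℕ) (hd : 1 ≤ d) (q : ℝ) (hq : 0 < q) :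
    ∫ v : Fin d → ℝ, (v ⬝ᵥ v) ^ ((q / 2 - 1) * ((d : ℝ) / 2)) *
      Real.exp (-(1 / 2) * (v ⬝ᵥ v) ^ (q / 2)) = 2 / q * (2 * Real.pi) ^ ((d : ℝ) / 2) := by
  have : Nonempty (Fin d) := ⟨⟨0, hd⟩⟩
  have hd0 : (0 : ℝ) < d := by exact_mod_cast hd
  have h1 : ∀ v : Fin d → ℝ, v ⬝ᵥ v = ‖WithLp.toLp 2 v‖ ^ 2 := by
    intro v
    rw [EuclideanSpace.real_norm_sq_eq]
    simp [dotProduct, sq]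
  simp_rw [h1]
  rw [(PiLp.volume_preserving_toLp (Fin d)).integral_comp
    (MeasurableEquiv.toLp 2 (Fin d → ℝ)).measurableEmbedding
    (fun x : EuclideanSpace ℝ (Fin d) => (‖x‖ ^ 2) ^ ((q / 2 - 1) * ((d : ℝ) / 2)) *
      Real.exp (-(1 / 2) * (‖x‖ ^ 2) ^ (q / 2)))]
  rw [integral_fun_norm_addHaar volume (fun x : ℝ => (x ^ 2) ^ ((q / 2 - 1) * ((d : ℝ) / 2)) *
      Real.exp (-(1 / 2) * (x ^ 2) ^ (q / 2)))]
  have h2 : ∫ y in Set.Ioi (0 : ℝ), y ^ (Module.finrank ℝ (EuclideanSpace ℝ (Fin d)) - 1) •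
      ((y ^ 2) ^ ((q / 2 - 1) * ((d : ℝ) / 2)) * Real.exp (-(1 / 2) * (y ^ 2) ^ (q / 2))) =
      ∫ y in Set.Ioi (0 : ℝ), y ^ (q * d / 2 - 1) * Real.exp (-(1 / 2) * y ^ q) := by
    refine setIntegral_congr_fun measurableSet_Ioi fun y hy => ?_
    have hy : 0 < y := hy
    simp only [finrank_euclideanSpace, Fintype.card_fin, smul_eq_mul]
    rw [← Real.rpow_natCast y 2, ← Real.rpow_natCast y (d - 1), ← Real.rpow_mul hy.le,
      ← Real.rpow_mul hy.le, ← mul_assoc, ← Real.rpow_add hy, Nat.cast_sub hd]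
    have a1 : ((d : ℝ) - (1 : ℕ)) + ((2 : ℕ) : ℝ) * ((q / 2 - 1) * ((d : ℝ) / 2)) =
        q * d / 2 - 1 := by
      push_cast
      ring
    have a2 : ((2 : ℕ) : ℝ) * (q / 2) = q := by
      push_cast
      ring
    rw [a1, a2]
  have hqd : 0 < q * d := by positivity
  rw [h2, integral_rpow_mul_exp_neg_mul_rpow hq (by linarith) (by norm_num)]
  rw [measureReal_def, EuclideanSpace.volume_ball]
  simp only [finrank_euclideanSpace, Fintype.card_fin, smul_eq_mul, nsmul_eq_mul]
  have hG : 0 < Real.Gamma ((d : ℝ) / 2) := Real.Gamma_pos_of_pos (by positivity)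
  have e1 : (q * d / 2 - 1 + 1) / q = (d : ℝ) / 2 := by field_simp; ring
  have e2 : -(q * d / 2 - 1 + 1) / q = -((d : ℝ) / 2) := by rw [← e1]; ring
  rw [e1, e2, Real.Gamma_add_one (by positivity), ENNReal.ofReal_one, one_pow, one_mul,
    ENNReal.toReal_ofReal (by positivity), Real.sqrt_eq_rpow, ← Real.rpow_natCast,
    ← Real.rpow_mul Real.pi_pos.le, Real.mul_rpow (by norm_num) Real.pi_pos.le,
    one_div, Real.inv_rpow (by norm_num), Real.rpow_neg (by norm_num), inv_inv,
    show (2 : ℝ)⁻¹ * d = d / 2 by ring]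
  field_simp

lemma qED_factor {d : ℕ} (C : Matrix (Fin d) (Fin d) ℝ) (hC : C.PosDef) :
    ∃ B : Matrix (Fin d) (Fin d) ℝ, C⁻¹ = Bᵀ * B := by
  open scoped MatrixOrder in
  obtain ⟨B, hB⟩ := CStarAlgebra.nonneg_iff_eq_star_mul_self.mp hC.inv.posSemidef.nonneg
  exact ⟨B, by rw [hB]; simp [Matrix.star_eq_conjTranspose]⟩

/-- The multivariate q-exponential density
`p(u) = (q/2) (2π)^{−d/2} det(C)^{−1/2} r(u)^{(q/2−1)(d/2)} exp{−(1/2) r(u)^{q/2}}`,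
with `r(u) = (u−μ)ᵀ C⁻¹ (u−μ)`, integrates to 1 over ℝ^d. -/
theorem qED_density_integrates_to_one
    (d : ℕ) (hd : 1 ≤ d) (q : ℝ) (hq : 0 < q)
    (μ : Fin d → ℝ) (C : Matrix (Fin d) (Fin d) ℝ) (hC : C.PosDef) :
    ∫ u : Fin d → ℝ,
      q / 2 * (2 * Real.pi) ^ (-(d : ℝ) / 2) * C.det ^ (-(1 : ℝ) / 2) *
        ((u - μ) ⬝ᵥ (C⁻¹ *ᵥ (u - μ))) ^ ((q / 2 - 1) * ((d : ℝ) / 2)) *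
        Real.exp (-(1 / 2) * ((u - μ) ⬝ᵥ (C⁻¹ *ᵥ (u - μ))) ^ (q / 2)) = 1 := by
  obtain ⟨B, hB⟩ := qED_factor C hC
  have hdet : C.det⁻¹ = B.det ^ 2 := by
    have := congrArg Matrix.det hB
    rwa [Matrix.det_nonsing_inv, Ring.inverse_eq_inv', Matrix.det_mul, Matrix.det_transpose,
      ← sq] at this
  have hCd : 0 < C.det := hC.det_pos
  have hBd : B.det ≠ 0 := by
    intro h
    rw [h] at hdet
    have := inv_pos.mpr hCd
    simp [hdet] at this
  have hdet2 : C.det ^ (-(1 : ℝ) / 2) = |B.det| := by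
    rw [neg_div, Real.rpow_neg hCd.le, ← Real.inv_rpow hCd.le, hdet, ← Real.sqrt_eq_rpow,
      Real.sqrt_sq_eq_abs]
  set F : (Fin d → ℝ) → ℝ := fun v => (v ⬝ᵥ v) ^ ((q / 2 - 1) * ((d : ℝ) / 2)) *
      Real.exp (-(1 / 2) * (v ⬝ᵥ v) ^ (q / 2)) with hF
  have hFm : Measurable F := by
    have : Measurable fun v : Fin d → ℝ => v ⬝ᵥ v := by
      unfold dotProduct
      fun_prop
    exact (this.pow_const _).mul (((this.pow_const _).const_mul _).exp)
  have hr : ∀ w : Fin d → ℝ, w ⬝ᵥ (C⁻¹ *ᵥ w) = (B *ᵥ w) ⬝ᵥ (B *ᵥ w) := by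
    intro w
    rw [hB, ← Matrix.mulVec_mulVec, Matrix.dotProduct_mulVec, Matrix.vecMul_transpose]
  have hint : ∫ w : Fin d → ℝ, F (B *ᵥ w) = |B.det|⁻¹ * (2 / q * (2 * Real.pi) ^ ((d : ℝ) / 2)) := by
    have hm : Measurable (Matrix.toLin' B) := (Matrix.toLin' B).continuous_of_finiteDimensional.measurable
    have h := integral_map (μ := volume) hm.aemeasurable (f := F) hFm.aestronglyMeasurable
    rw [Real.map_matrix_volume_pi_eq_smul_volume_pi hBd, MeasureTheory.integral_smul_measure,
      qED_radial d hd q hq, ENNReal.toReal_ofReal (abs_nonneg _), abs_inv] at h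
    simpa using h.symm
  rw [integral_sub_right_eq_self (fun w : Fin d → ℝ => 
    q / 2 * (2 * Real.pi) ^ (-(d : ℝ) / 2) * C.det ^ (-(1 : ℝ) / 2) *
        (w ⬝ᵥ (C⁻¹ *ᵥ w)) ^ ((q / 2 - 1) * ((d : ℝ) / 2)) *
        Real.exp (-(1 / 2) * (w ⬝ᵥ (C⁻¹ *ᵥ w)) ^ (q / 2))) μ]
  simp_rw [hr]
  simp_rw [mul_assoc (q / 2 * (2 * Real.pi) ^ (-(d : ℝ) / 2) * C.det ^ (-(1 : ℝ) / 2))]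
  rw [integral_const_mul]
  have : ∫ w : Fin d → ℝ, ((B *ᵥ w) ⬝ᵥ (B *ᵥ w)) ^ ((q / 2 - 1) * ((d : ℝ) / 2)) *
      Real.exp (-(1 / 2) * ((B *ᵥ w) ⬝ᵥ (B *ᵥ w)) ^ (q / 2)) = _ := hint
  rw [this, hdet2, neg_div, Real.rpow_neg (by positivity)]
  have : 0 < |B.det| := abs_pos.mpr hBd
  have h2 : 0 < (2 * Real.pi) ^ ((d : ℝ) / 2) := by positivity
  field_simp
end

section
/- Let d ≥ 1, q > 0, and let C ∈ ℝ^{d×d} be symmetric positive definite. If the random vector u ∈ ℝ^d has the multivariate q-exponential density p(u) = (q/2)(2π)^{−d/2} det(C)^{−1/2} r(u)^{(q/2−1)(d/2)} exp{−(1/2) r(u)^{q/2}} with r(u) = uᵀ C^{−1} u, then R^q := r(u)^{q/2} follows the Gamma distribution with shape d/2 and rate 1/2 (i.e. the chi-squared distribution with d degrees of freedom); equivalently, the pushforward of the probability measure with density p under the map u ↦ (uᵀ C^{−1} u)^{q/2} equals the measure on (0,∞) with density v ↦ (1/2)^{d/2} v^{d/2−1} e^{−v/2} / Γ(d/2) with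 respect to Lebesgue measure. -/
open Real MeasureTheory Matrix

open scoped MatrixOrder ComplexOrder in
lemma qaux_factor {d : ℕ} (C : Matrix (Fin d) (Fin d) ℝ) (hC : C.PosDef) :
    ∃ B : Matrix (Fin d) (Fin d) ℝ, C⁻¹ = Bᵀ * B ∧ B.det ≠ 0 ∧ |B.det⁻¹| = √C.det := by
  obtain ⟨B, hB⟩ := CStarAlgebra.nonneg_iff_eq_star_mul_self.mp hC.inv.posSemidef.nonneg
  have hB' : C⁻¹ = Bᵀ * B := by
    rw [hB, star_eq_conjTranspose, conjTranspose_eq_transpose_of_trivial]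
  have hdet : C.det⁻¹ = B.det * B.det := by
    have := congrArg Matrix.det hB'
    rwa [det_mul, det_transpose, det_nonsing_inv, Ring.inverse_eq_inv'] at this
  have hp := hC.det_pos
  have h0 : B.det ≠ 0 := by
    intro h
    rw [h, mul_zero, inv_eq_zero] at hdet
    exact hp.ne' hdet
  refine ⟨B, hB', h0, ?_⟩
  rw [← Real.sqrt_sq_eq_abs]
  congr 1
  rw [inv_pow, sq, ← hdet, inv_inv]

lemma qaux_volume {d : ℕ} (hd : 1 ≤ d) (C : Matrix (Fin d) (Fin d) ℝ) (hC : C.PosDef)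
    (s : ℝ) (hs : 0 ≤ s) :
    volume {u : Fin d → ℝ | u ⬝ᵥ (C⁻¹ *ᵥ u) ≤ s ^ 2} =
      ENNReal.ofReal (√C.det * (√π ^ d / Gamma (d / 2 + 1)) * s ^ d) := by
  obtain ⟨B, hB, h0, hdet⟩ := qaux_factor C hC
  haveI : Nonempty (Fin d) := ⟨⟨0, hd⟩⟩
  have e1 : {u : Fin d → ℝ | u ⬝ᵥ (C⁻¹ *ᵥ u) ≤ s ^ 2} =
      (Matrix.toLin' B) ⁻¹' ((WithLp.toLp 2 : (Fin d → ℝ) → EuclideanSpace ℝ (Fin d)) ⁻¹'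
        Metric.closedBall 0 s) := by
    ext u
    have : u ⬝ᵥ (C⁻¹ *ᵥ u) = ∑ i, (B *ᵥ u) i ^ 2 := by
      rw [hB, ← mulVec_mulVec, dotProduct_mulVec, vecMul_transpose]
      simp [dotProduct, sq]
    simp only [Set.mem_setOf_eq, Set.mem_preimage, this, mem_closedBall_zero_iff,
      EuclideanSpace.norm_eq, Matrix.toLin'_apply, Real.norm_eq_abs, sq_abs]
    rw [Real.sqrt_le_left hs]
  have hd' : LinearMap.det (Matrix.toLin' B) ≠ 0 := by rwa [LinearMap.det_toLin']
  rw [e1, Measure.addHaar_preimage_linearMap volume hd', LinearMap.det_toLin', hdet,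
    (PiLp.volume_preserving_toLp (Fin d)).measure_preimage
      Metric.isClosed_closedBall.measurableSet.nullMeasurableSet,
    EuclideanSpace.volume_closedBall, Fintype.card_fin, ← ENNReal.ofReal_pow hs,
    ← ENNReal.ofReal_mul (by positivity), ← ENNReal.ofReal_mul (by positivity)]
  congr 1
  ring

lemma qaux_map {d : ℕ} (hd : 1 ≤ d) (q : ℝ) (hq : 0 < q)
    (C : Matrix (Fin d) (Fin d) ℝ) (hC : C.PosDef)
    (hnn : ∀ u : Fin d → ℝ, 0 ≤ u ⬝ᵥ (C⁻¹ *ᵥ u))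
    (hm : Measurable (fun u : Fin d → ℝ => (u ⬝ᵥ (C⁻¹ *ᵥ u)) ^ (q / 2))) :
    Measure.map (fun u : Fin d → ℝ => (u ⬝ᵥ (C⁻¹ *ᵥ u)) ^ (q / 2)) volume =
      (volume.restrict (Set.Ioi (0 : ℝ))).withDensity fun v : ℝ =>
        ENNReal.ofReal (√C.det * (√π ^ d / Gamma (d / 2 + 1)) * (d / q) * v ^ (d / q - 1)) := by
  set K := √C.det * (√π ^ d / Gamma (d / 2 + 1)) with hK
  have hK0 : 0 ≤ K := by positivity
  have hdpos : (0 : ℝ) < d := by exact_mod_cast hd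
  have key : ∀ t, Measure.map (fun u : Fin d → ℝ => (u ⬝ᵥ (C⁻¹ *ᵥ u)) ^ (q / 2)) volume
      (Set.Iic t) = if t < 0 then 0 else ENNReal.ofReal (K * t ^ (d / q : ℝ)) := by
    intro t
    rw [Measure.map_apply hm measurableSet_Iic]
    split_ifs with ht
    · convert measure_empty (μ := (volume : Measure (Fin d → ℝ)))
      ext u
      simp only [Set.mem_preimage, Set.mem_Iic, Set.mem_empty_iff_false, iff_false, not_le]
      exact ht.trans_le (Real.rpow_nonneg (hnn u) _)
    · push Not at ht
      have := qaux_volume hd C hC (t ^ (1 / q)) (by positivity)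
      rw [← Real.rpow_natCast (t ^ (1 / q)) d, ← Real.rpow_mul ht] at this
      rw [hK, show (d : ℝ) / q = 1 / q * d by ring, ← this]
      congr 1
      ext u
      simp only [Set.mem_preimage, Set.mem_Iic, Set.mem_setOf_eq]
      rw [← Real.rpow_natCast, ← Real.rpow_mul ht]
      rw [← Real.le_rpow_inv_iff_of_pos (hnn u) ht (by positivity)]
      rw [show (q / 2)⁻¹ = 1 / q * ((2 : ℕ) : ℝ) by field_simp; norm_num]
  refine Measure.ext_of_generateFrom_of_iUnion (Set.range Set.Iic) (fun n : ℕ => Set.Iic (n : ℝ))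
    (by rw [← borel_eq_generateFrom_Iic]; exact BorelSpace.measurable_eq) isPiSystem_Iic ?_
    (fun n => ⟨_, rfl⟩) ?_ ?_
  · ext x
    simpa using exists_nat_ge x
  · intro i
    rw [key]
    split_ifs <;> simp
  · rintro _ ⟨t, rfl⟩
    rw [key, withDensity_apply _ measurableSet_Iic, Measure.restrict_restrict measurableSet_Iic,
      Set.Iic_inter_Ioi]
    split_ifs with ht
    · rw [Set.Ioc_eq_empty (by linarith)]; simp
    · push Not at ht
      have hr : -1 < (d : ℝ) / q - 1 := by
        have : 0 < (d : ℝ) / q := by positivity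
        linarith
      rw [← ofReal_integral_eq_lintegral_ofReal]
      · rw [← intervalIntegral.integral_of_le ht, intervalIntegral.integral_const_mul,
          integral_rpow (Or.inl hr), sub_add_cancel, Real.zero_rpow (by positivity)]
        congr 1
        field_simp
        ring
      · have := (intervalIntegral.intervalIntegrable_rpow' (a := 0) (b := t) hr).const_mul
          (K * (d / q))
        exact (intervalIntegrable_iff_integrableOn_Ioc_of_le ht).1 this
      · filter_upwards [ae_restrict_mem measurableSet_Ioc] with x hx
        have := hx.1
        simp only [Pi.zero_apply]
        positivity

/-- If `u` has the multivariate q-exponential density `q-ED_d(0, C)`, then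
`R^q = r(u)^{q/2}` follows the Gamma distribution with shape `d/2` and rate `1/2`
(the chi-squared distribution with `d` degrees of freedom): the pushforward of the
measure with the q-exponential density under `u ↦ (uᵀ C⁻¹ u)^{q/2}` is the measure
on (0,∞) with density `v ↦ (1/2)^{d/2} v^{d/2−1} e^{−v/2} / Γ(d/2)`. -/
theorem qED_radial_power_is_chiSq
    (d : ℕ) (hd : 1 ≤ d) (q : ℝ) (hq : 0 < q)
    (C : Matrix (Fin d) (Fin d) ℝ) (hC : C.PosDef) :
    Measure.map (fun u : Fin d → ℝ => (u ⬝ᵥ (C⁻¹ *ᵥ u)) ^ (q / 2))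
        (volume.withDensity fun u : Fin d → ℝ =>
          ENNReal.ofReal
            (q / 2 * (2 * Real.pi) ^ (-(d : ℝ) / 2) * C.det ^ (-(1 : ℝ) / 2) *
              (u ⬝ᵥ (C⁻¹ *ᵥ u)) ^ ((q / 2 - 1) * ((d : ℝ) / 2)) *
              Real.exp (-(1 / 2) * (u ⬝ᵥ (C⁻¹ *ᵥ u)) ^ (q / 2)))) =
      (volume.restrict (Set.Ioi (0 : ℝ))).withDensity fun v : ℝ =>
        ENNReal.ofReal
          ((1 / 2 : ℝ) ^ ((d : ℝ) / 2) * v ^ ((d : ℝ) / 2 - 1) *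
            Real.exp (-v / 2) / Real.Gamma ((d : ℝ) / 2)) := by
  have hnn : ∀ u : Fin d → ℝ, 0 ≤ u ⬝ᵥ (C⁻¹ *ᵥ u) := fun u => by
    simpa using hC.inv.posSemidef.dotProduct_mulVec_nonneg u
  have hc : Continuous (fun u : Fin d → ℝ => u ⬝ᵥ (C⁻¹ *ᵥ u)) := by fun_prop
  have hm : Measurable (fun u : Fin d → ℝ => (u ⬝ᵥ (C⁻¹ *ᵥ u)) ^ (q / 2)) :=
    hc.measurable.pow_const _
  have hdpos : (0 : ℝ) < d := by exact_mod_cast hd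
  have hp := hC.det_pos
  let g : ℝ → ENNReal := fun v => ENNReal.ofReal
    (q / 2 * (2 * Real.pi) ^ (-(d : ℝ) / 2) * C.det ^ (-(1 : ℝ) / 2) *
      v ^ ((1 - 2 / q) * ((d : ℝ) / 2)) * Real.exp (-(1 / 2) * v))
  have hg : Measurable g := by fun_prop
  have e : (fun u : Fin d → ℝ =>
          ENNReal.ofReal
            (q / 2 * (2 * Real.pi) ^ (-(d : ℝ) / 2) * C.det ^ (-(1 : ℝ) / 2) *
              (u ⬝ᵥ (C⁻¹ *ᵥ u)) ^ ((q / 2 - 1) * ((d : ℝ) / 2)) *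
              Real.exp (-(1 / 2) * (u ⬝ᵥ (C⁻¹ *ᵥ u)) ^ (q / 2)))) =
      fun u => g ((u ⬝ᵥ (C⁻¹ *ᵥ u)) ^ (q / 2)) := by
    funext u
    simp only [g]
    rw [← Real.rpow_mul (hnn u) (q / 2) ((1 - 2 / q) * ((d : ℝ) / 2))]
    rw [show q / 2 * ((1 - 2 / q) * ((d : ℝ) / 2)) = (q / 2 - 1) * ((d : ℝ) / 2) by
      field_simp]
  have e2 : Measure.map (fun u : Fin d → ℝ => (u ⬝ᵥ (C⁻¹ *ᵥ u)) ^ (q / 2))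
      (volume.withDensity fun u => g ((u ⬝ᵥ (C⁻¹ *ᵥ u)) ^ (q / 2))) =
      (Measure.map (fun u : Fin d → ℝ => (u ⬝ᵥ (C⁻¹ *ᵥ u)) ^ (q / 2)) volume).withDensity g := by
    ext s hs
    rw [Measure.map_apply hm hs, withDensity_apply _ (hm hs), withDensity_apply _ hs,
      setLIntegral_map hs hg hm]
  rw [e, e2, qaux_map hd q hq C hC hnn hm, ← withDensity_mul _ (by fun_prop) hg]
  refine withDensity_congr_ae ?_
  filter_upwards [ae_restrict_mem measurableSet_Ioi] with v hv
  have hv : 0 < v := hv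
  simp only [g, Pi.mul_apply]
  rw [← ENNReal.ofReal_mul (by positivity)]
  congr 1
  have h1 : √C.det * C.det ^ (-(1 : ℝ) / 2) = 1 := by
    rw [Real.sqrt_eq_rpow, ← Real.rpow_add hp]; norm_num
  have h2 : √π ^ d * (2 * π) ^ (-(d : ℝ) / 2) = (1 / 2 : ℝ) ^ ((d : ℝ) / 2) := by
    rw [Real.sqrt_eq_rpow, ← Real.rpow_natCast, ← Real.rpow_mul pi_pos.le,
      Real.mul_rpow (by norm_num) pi_pos.le, mul_left_comm, ← Real.rpow_add pi_pos,
      one_div (2 : ℝ), Real.inv_rpow (by norm_num), ← Real.rpow_neg (by norm_num)]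
    rw [show (2 : ℝ)⁻¹ * d + -d / 2 = 0 by ring, Real.rpow_zero, mul_one, neg_div]
  have h3 : v ^ ((d : ℝ) / q - 1) * v ^ ((1 - 2 / q) * ((d : ℝ) / 2)) =
      v ^ ((d : ℝ) / 2 - 1) := by
    rw [← Real.rpow_add hv]
    congr 1
    field_simp
    ring
  have hG : 0 < Gamma ((d : ℝ) / 2) := Real.Gamma_pos_of_pos (by positivity)
  rw [Real.Gamma_add_one (by positivity), show -(1 / 2) * v = -v / 2 by ring, ← h2, ← h3]
  calc _ = (√C.det * C.det ^ (-(1 : ℝ) / 2)) * (√π ^ d / ((d : ℝ) / 2 * Gamma ((d : ℝ) / 2)) *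
        (d / q) * (q / 2) * (2 * π) ^ (-(d : ℝ) / 2) * (v ^ ((d : ℝ) / q - 1) *
        v ^ ((1 - 2 / q) * ((d : ℝ) / 2))) * rexp (-v / 2)) := by ring
    _ = _ := by
      rw [h1, one_mul]
      field_simp
end

section
/- Let d ≥ 1, q > 0, μ ∈ ℝ^d, and let C ∈ ℝ^{d×d} be symmetric positive definite. If the random vector u ∈ ℝ^d has the multivariate q-exponential density p(u) = (q/2)(2π)^{−d/2} det(C)^{−1/2} r(u)^{(q/2−1)(d/2)} exp{−(1/2) r(u)^{q/2}} with r(u) = (u−μ)ᵀ C^{−1} (u−μ), then the mean of u equals μ, i.e. for every coordinate i one has ∫_{ℝ^d} u_i p(u) du = μ_i. -/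
open Real MeasureTheory Matrix

lemma aux_int {d : ℕ} (hd : 1 ≤ d) {q : ℝ} (hq : 0 < q) (k : ℕ) :
    Integrable (fun x : EuclideanSpace ℝ (Fin d) => ‖x‖ ^ k *
      ((‖x‖^2) ^ ((q / 2 - 1) * ((d : ℝ) / 2)) * Real.exp (-(1 / 2) * (‖x‖^2) ^ (q / 2)))) := by
  have : Nonempty (Fin d) := ⟨⟨0, hd⟩⟩
  rw [integrable_fun_norm_addHaar volume (f := fun r : ℝ => r ^ k *
      ((r^2) ^ ((q / 2 - 1) * ((d : ℝ) / 2)) * Real.exp (-(1 / 2) * (r^2) ^ (q / 2))))]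
  have hd' : (1:ℝ) ≤ d := by exact_mod_cast hd
  have := integrableOn_rpow_mul_exp_neg_mul_rpow (p := q) (s := q * d / 2 - 1 + k) (b := 1/2)
    (by have : 0 < q * d / 2 := by positivity
        have : (0:ℝ) ≤ k := by positivity
        linarith) hq (by norm_num)
  refine this.congr_fun (fun r hr => ?_) measurableSet_Ioi
  have hr : 0 < r := hr
  simp only [finrank_euclideanSpace, Fintype.card_fin, smul_eq_mul]
  rw [← Real.rpow_natCast r 2, ← Real.rpow_mul hr.le, ← Real.rpow_mul hr.le, ← mul_assoc, ← mul_assoc,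
    ← Real.rpow_natCast r (d-1), ← Real.rpow_natCast r k, ← Real.rpow_add hr, ← Real.rpow_add hr]
  push_cast [hd]
  ring_nf

lemma aux_val {d : ℕ} (hd : 1 ≤ d) {q : ℝ} (hq : 0 < q) :
    ∫ x : EuclideanSpace ℝ (Fin d), 
      ((‖x‖^2) ^ ((q / 2 - 1) * ((d : ℝ) / 2)) * Real.exp (-(1 / 2) * (‖x‖^2) ^ (q / 2)))
     = (q / 2 * (2 * Real.pi) ^ (-(d : ℝ) / 2))⁻¹ := by
  have : Nonempty (Fin d) := ⟨⟨0, hd⟩⟩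
  rw [integral_fun_norm_addHaar volume (fun r : ℝ => 
      ((r^2) ^ ((q / 2 - 1) * ((d : ℝ) / 2)) * Real.exp (-(1 / 2) * (r^2) ^ (q / 2))))]
  have hd' : (0:ℝ) < d := by exact_mod_cast hd
  have := integral_rpow_mul_exp_neg_mul_rpow (p := q) (q := q * d / 2 - 1) (b := 1/2) hq
    (by have : 0 < q * d / 2 := by positivity
        linarith) (by norm_num)
  rw [setIntegral_congr_fun (g := fun r : ℝ => r ^ (q * d / 2 - 1) * Real.exp (-(1/2) * r ^ q)) measurableSet_Ioi, this]
  · have e1 : (volume.real (Metric.ball (0 : EuclideanSpace ℝ (Fin d)) 1)) = π ^ ((d:ℝ)/2) / (d / 2 * Real.Gamma (d/2)) := by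
      have hG : 0 < Real.Gamma ((d:ℝ)/2) := Real.Gamma_pos_of_pos (by positivity)
      rw [measureReal_def, EuclideanSpace.volume_ball, Fintype.card_fin, Real.Gamma_add_one (by positivity)]
      simp only [ENNReal.ofReal_one, one_pow, one_mul]
      rw [ENNReal.toReal_ofReal (by positivity), Real.sqrt_eq_rpow, ← Real.rpow_natCast, ← Real.rpow_mul pi_pos.le]
      ring_nf
    have hG : 0 < Real.Gamma ((d:ℝ)/2) := Real.Gamma_pos_of_pos (by positivity)
    rw [e1, finrank_euclideanSpace, Fintype.card_fin, show (q * d / 2 - 1 + 1) / q = (d:ℝ)/2 by field_simp; ring,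
      show -(q * d / 2 - 1 + 1) / q = -((d:ℝ)/2) by field_simp; ring, neg_div, Real.rpow_neg (by positivity), 
      Real.rpow_neg (by positivity), Real.mul_rpow (by norm_num) pi_pos.le, one_div, Real.inv_rpow (by norm_num), inv_inv]
    simp only [nsmul_eq_mul, smul_eq_mul]
    have := Real.rpow_pos_of_pos pi_pos ((d:ℝ)/2)
    have := Real.rpow_pos_of_pos (two_pos (α := ℝ)) ((d:ℝ)/2)
    field_simp
  · intro r hr
    have hr : 0 < r := hr
    simp only [finrank_euclideanSpace, Fintype.card_fin, smul_eq_mul]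
    rw [← Real.rpow_natCast r 2, ← Real.rpow_mul hr.le, ← Real.rpow_mul hr.le, ← mul_assoc,
      ← Real.rpow_natCast r (d-1), ← Real.rpow_add hr]
    push_cast [hd]
    ring_nf

/-- the standard part -/
lemma aux_std {d : ℕ} (hd : 1 ≤ d) {q : ℝ} (hq : 0 < q) (m : ℝ) (a : Fin d → ℝ) :
    ∫ w : Fin d → ℝ, (m + a ⬝ᵥ w) * 
      ((w ⬝ᵥ w) ^ ((q / 2 - 1) * ((d : ℝ) / 2)) * Real.exp (-(1 / 2) * (w ⬝ᵥ w) ^ (q / 2)))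
     = m * (q / 2 * (2 * Real.pi) ^ (-(d : ℝ) / 2))⁻¹ := by
  rw [← (PiLp.volume_preserving_ofLp (Fin d)).integral_comp
    (MeasurableEquiv.toLp 2 (Fin d → ℝ)).symm.measurableEmbedding]
  have hn : ∀ x : EuclideanSpace ℝ (Fin d), x.ofLp ⬝ᵥ x.ofLp = ‖x‖^2 := by
    intro x
    rw [EuclideanSpace.real_norm_sq_eq]
    simp [dotProduct, sq]
  simp only [hn, add_mul]
  set φ : EuclideanSpace ℝ (Fin d) → ℝ := fun x =>
    (‖x‖^2) ^ ((q / 2 - 1) * ((d : ℝ) / 2)) * Real.exp (-(1 / 2) * (‖x‖^2) ^ (q / 2)) with hφ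
  have h0 : Integrable φ := by
    have h := aux_int hd hq 0
    simp only [pow_zero, one_mul] at h
    exact h
  have h1 : Integrable (fun x => (a ⬝ᵥ x.ofLp) * φ x) := by
    have hb := (aux_int hd hq 1).const_mul ‖WithLp.toLp 2 a‖
    refine hb.mono' ?_ ?_
    · refine AEStronglyMeasurable.mul ?_ h0.1
      exact Continuous.aestronglyMeasurable (by unfold dotProduct; fun_prop)
    · refine Filter.Eventually.of_forall fun x => ?_
      have : a ⬝ᵥ x.ofLp = inner ℝ x (WithLp.toLp 2 a) := by
        simp [PiLp.inner_apply, dotProduct]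
      have h2 := abs_real_inner_le_norm x (WithLp.toLp 2 a)
      have h3 : 0 ≤ φ x := by simp only [hφ]; positivity
      rw [norm_mul, Real.norm_of_nonneg h3, this, Real.norm_eq_abs, pow_one]
      refine (mul_le_mul_of_nonneg_right h2 h3).trans (le_of_eq ?_)
      simp only [hφ]
      ring
  have h2 : ∫ x, (a ⬝ᵥ x.ofLp) * φ x = 0 := by
    have := integral_neg_eq_self (fun x => (a ⬝ᵥ x.ofLp) * φ x) volume
    have h : ∀ x, (a ⬝ᵥ (-x).ofLp) * φ (-x) = - ((a ⬝ᵥ x.ofLp) * φ x) := by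
      intro x; simp [hφ]
    simp only [h, integral_neg] at this
    linarith
  change ∫ x, (m * φ x + (a ⬝ᵥ x.ofLp) * φ x) = _
  rw [integral_add (h0.const_mul m) h1, h2, integral_const_mul, aux_val hd hq, add_zero]

/-- If `u` has the multivariate q-exponential density `q-ED_d(μ, C)`, then the mean
of `u` equals `μ`: for every coordinate `i`, `∫ u_i p(u) du = μ_i`. -/
theorem qED_mean
    (d : ℕ) (hd : 1 ≤ d) (q : ℝ) (hq : 0 < q)
    (μ : Fin d → ℝ) (C : Matrix (Fin d) (Fin d) ℝ) (hC : C.PosDef) :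
    ∀ i : Fin d,
      ∫ u : Fin d → ℝ,
        u i *
          (q / 2 * (2 * Real.pi) ^ (-(d : ℝ) / 2) * C.det ^ (-(1 : ℝ) / 2) *
            ((u - μ) ⬝ᵥ (C⁻¹ *ᵥ (u - μ))) ^ ((q / 2 - 1) * ((d : ℝ) / 2)) *
            Real.exp (-(1 / 2) * ((u - μ) ⬝ᵥ (C⁻¹ *ᵥ (u - μ))) ^ (q / 2))) = μ i := by
  intro i
  obtain ⟨B, hB⟩ : ∃ B : Matrix (Fin d) (Fin d) ℝ, C⁻¹ = Bᵀ * B := by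
    open scoped MatrixOrder Matrix.Norms.L2Operator in
    obtain ⟨B, hB⟩ := CStarAlgebra.nonneg_iff_eq_star_mul_self.mp hC.inv.posSemidef.nonneg
    exact ⟨B, by rw [hB, star_eq_conjTranspose, conjTranspose_eq_transpose_of_trivial]⟩
  have hCd : 0 < C.det := hC.det_pos
  have hdet : B.det ^ 2 = C.det⁻¹ := by
    have := congrArg det hB
    rw [det_mul, det_transpose, det_nonsing_inv, Ring.inverse_eq_inv'] at this
    rw [this, sq]
  have hB0 : B.det ≠ 0 := by
    intro h
    rw [h] at hdet
    have : 0 < C.det⁻¹ := inv_pos.mpr hCd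
    norm_num at hdet
    linarith
  have habs : |B.det| = C.det ^ (-(1:ℝ)/2) := by
    rw [← Real.sqrt_sq_eq_abs, hdet, Real.sqrt_eq_rpow, Real.inv_rpow hCd.le, neg_div, Real.rpow_neg hCd.le]
  rw [← integral_add_right_eq_self _ μ]
  simp only [add_sub_cancel_right]
  set K := q / 2 * (2 * Real.pi) ^ (-(d : ℝ) / 2) with hK
  have hKpos : 0 < K := by positivity
  set F : (Fin d → ℝ) → ℝ := fun w => (μ i + (B⁻¹ i) ⬝ᵥ w) * 
      ((w ⬝ᵥ w) ^ ((q / 2 - 1) * ((d : ℝ) / 2)) * Real.exp (-(1 / 2) * (w ⬝ᵥ w) ^ (q / 2))) with hF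
  have key : ∀ u : Fin d → ℝ, (u + μ) i * (K * C.det ^ (-(1 : ℝ) / 2) *
            (u ⬝ᵥ (C⁻¹ *ᵥ u)) ^ ((q / 2 - 1) * ((d : ℝ) / 2)) *
            Real.exp (-(1 / 2) * (u ⬝ᵥ (C⁻¹ *ᵥ u)) ^ (q / 2))) = 
            (K * C.det ^ (-(1 : ℝ) / 2)) * F (toLin' B u) := by
    intro u
    have e1 : u ⬝ᵥ (C⁻¹ *ᵥ u) = (B *ᵥ u) ⬝ᵥ (B *ᵥ u) := by
      rw [hB, ← mulVec_mulVec, dotProduct_mulVec, vecMul_transpose]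
    have e2 : (B⁻¹ i) ⬝ᵥ (B *ᵥ u) = u i := by
      change (B⁻¹ *ᵥ (B *ᵥ u)) i = u i
      rw [mulVec_mulVec, nonsing_inv_mul _ (isUnit_iff_ne_zero.mpr hB0), one_mulVec]
    simp only [hF, toLin'_apply, e1, e2, Pi.add_apply]
    ring
  simp only [key]
  rw [integral_const_mul]
  have hemb : MeasurableEmbedding (toLin' B) := by
    have := (LinearEquiv.ofIsUnitDet (f := toLin' B) (v := Pi.basisFun ℝ (Fin d)) (v' := Pi.basisFun ℝ (Fin d))
      (by simpa using hB0)).toContinuousLinearEquiv.toHomeomorph.measurableEmbedding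
    exact this
  rw [← hemb.integral_map, Real.map_matrix_volume_pi_eq_smul_volume_pi hB0, integral_smul_measure,
    aux_std hd hq, ENNReal.toReal_ofReal (abs_nonneg _), abs_inv, habs, smul_eq_mul]
  have := Real.rpow_pos_of_pos hCd (-(1:ℝ)/2)
  rw [← hK]
  field_simp
end

section
/- Let d ≥ 1, q > 0, μ ∈ ℝ^d, and let C ∈ ℝ^{d×d} be symmetric positive definite. If the random vector u ∈ ℝ^d has the multivariate q-exponential density p(u) = (q/2)(2π)^{−d/2} det(C)^{−1/2} r(u)^{(q/2−1)(d/2)} exp{−(1/2) r(u)^{q/2}} with r(u) = (u−μ)ᵀ C^{−1} (u−μ), then the covariance matrix of u equals (2^{2/q} Γ(d/2 + 2/q) / (d Γ(d/2))) · C; i.e. for all coordinates i, j one has ∫_{ℝ^d} (u_i − μ_i)(u_j − μ_j) p(u) du = (2^{2/q} Γ(d/2 + 2/q) / (d Γ(d/2))) · C_{ij}. -/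
open Real MeasureTheory Matrix

lemma qed_cov {d : ℕ} (M : Matrix (Fin d) (Fin d) ℝ) (hM : M.det ≠ 0) (f : (Fin d → ℝ) → ℝ) :
    ∫ z, f (M *ᵥ z) = |M.det|⁻¹ * ∫ u, f u := by
  have hinj : Function.Injective (toLin' M) := by
    intro a b h
    simp only [toLin'_apply] at h
    exact Matrix.mulVec_injective_of_isUnit ((Matrix.isUnit_iff_isUnit_det _).2 hM.isUnit) h
  have hemb : MeasurableEmbedding (toLin' M) :=
    (LinearMap.continuous_of_finiteDimensional _).measurableEmbedding hinj
  have h := hemb.integral_map (μ := volume) f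
  rw [Real.map_matrix_volume_pi_eq_smul_volume_pi hM, integral_smul_measure] at h
  simp only [toLin'_apply] at h
  rw [← h, ENNReal.toReal_ofReal (abs_nonneg _), abs_inv, smul_eq_mul]

lemma qed_iso {d : ℕ} (h : ℝ → ℝ) (hm : Measurable h)
    (hint : Integrable (fun z : Fin d → ℝ => (z ⬝ᵥ z) * h (z ⬝ᵥ z))) (k l : Fin d) :
    Integrable (fun z : Fin d → ℝ => z k * z l * h (z ⬝ᵥ z)) ∧
    ∫ z : Fin d → ℝ, z k * z l * h (z ⬝ᵥ z) =
      if k = l then (1 / (d : ℝ)) * ∫ z : Fin d → ℝ, (z ⬝ᵥ z) * h (z ⬝ᵥ z) else 0 := by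
  have hI : ∀ k l : Fin d, Integrable (fun z : Fin d → ℝ => z k * z l * h (z ⬝ᵥ z)) := by
    intro k l
    refine hint.mono ?_ (Filter.Eventually.of_forall fun z => ?_)
    · apply Measurable.aestronglyMeasurable
      have : Measurable (fun z : Fin d → ℝ => z ⬝ᵥ z) := by
        unfold dotProduct; fun_prop
      have := hm.comp this
      simp only [Function.comp_def] at this
      fun_prop
    · rw [norm_mul (z k * z l), norm_mul (z ⬝ᵥ z)]
      refine mul_le_mul_of_nonneg_right ?_ (norm_nonneg _)
      rw [Real.norm_eq_abs, Real.norm_eq_abs, abs_mul]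
      have h1 : ∀ i, z i ^ 2 ≤ z ⬝ᵥ z := fun i => by
        rw [pow_two]
        exact Finset.single_le_sum (f := fun i => z i * z i)
          (fun j _ => mul_self_nonneg _) (Finset.mem_univ i)
      have := h1 k
      have := h1 l
      refine le_trans ?_ (le_abs_self _)
      nlinarith [sq_nonneg (|z k| - |z l|), sq_abs (z k), sq_abs (z l)]
  refine ⟨hI k l, ?_⟩
  split_ifs with hkl
  · subst hkl
    have hsw : ∀ j, ∫ z : Fin d → ℝ, z j * z j * h (z ⬝ᵥ z) =
        ∫ z : Fin d → ℝ, z k * z k * h (z ⬝ᵥ z) := by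
      intro j
      have hdet : |((Equiv.swap j k).permMatrix ℝ).det| = 1 := by
        rw [Matrix.det_permutation]
        rcases Int.units_eq_one_or (Equiv.Perm.sign (Equiv.swap j k)) with h | h <;> simp [h]
      have := qed_cov ((Equiv.swap j k).permMatrix ℝ) (by
        intro h0; rw [h0] at hdet; simp at hdet) (fun z => z j * z j * h (z ⬝ᵥ z))
      rw [hdet] at this
      simp only [Matrix.permMatrix_mulVec, inv_one, one_mul] at this
      rw [← this]
      congr 1; ext z
      have : (z ∘ (Equiv.swap j k)) ⬝ᵥ (z ∘ (Equiv.swap j k)) = z ⬝ᵥ z :=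
        Equiv.sum_comp (Equiv.swap j k) (fun i => z i * z i)
      rw [this]; simp
    have : ∫ z : Fin d → ℝ, (z ⬝ᵥ z) * h (z ⬝ᵥ z) =
        d * ∫ z : Fin d → ℝ, z k * z k * h (z ⬝ᵥ z) := by
      calc _ = ∫ z : Fin d → ℝ, ∑ j, z j * z j * h (z ⬝ᵥ z) := by
            congr 1; ext z; rw [← Finset.sum_mul]; rfl
        _ = _ := by
            rw [integral_finsetSum _ (fun j _ => hI j j)]
            simp [hsw]
    rw [this]
    have hd : (d : ℝ) ≠ 0 := by
      have := k.pos
      positivity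
    field_simp
  · set D : Fin d → ℝ := fun i => if i = k then -1 else 1 with hD
    have hdet : (Matrix.diagonal D).det = -1 := by
      rw [Matrix.det_diagonal, hD, Finset.prod_ite_eq' Finset.univ k (fun _ => (-1:ℝ))]; simp
    have := qed_cov (Matrix.diagonal D) (by rw [hdet]; norm_num)
      (fun z => z k * z l * h (z ⬝ᵥ z))
    rw [hdet] at this
    have h2 : ∀ z : Fin d → ℝ, (diagonal D *ᵥ z) ⬝ᵥ (diagonal D *ᵥ z) = z ⬝ᵥ z := by
      intro z
      unfold dotProduct
      refine Finset.sum_congr rfl fun i _ => ?_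
      rw [Matrix.mulVec_diagonal, hD]
      dsimp only
      split_ifs <;> ring
    simp only [h2, Matrix.mulVec_diagonal] at this
    have hk : D k = -1 := by simp [hD]
    have hl : D l = 1 := by simp [hD, Ne.symm hkl]
    rw [hk, hl] at this
    have h3 : ∀ z : Fin d → ℝ, -1 * z k * (1 * z l) * h (z ⬝ᵥ z) =
      - (z k * z l * h (z ⬝ᵥ z)) := fun z => by ring
    simp only [h3, integral_neg] at this
    simp at this
    linarith

lemma qed_rad {d : ℕ} (hd : 1 ≤ d) (q : ℝ) (hq : 0 < q) :
    Integrable (fun z : Fin d → ℝ => (z ⬝ᵥ z) *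
      ((z ⬝ᵥ z) ^ ((q / 2 - 1) * ((d : ℝ) / 2)) * exp (-(1/2) * (z ⬝ᵥ z) ^ (q / 2)))) ∧
    ∫ z : Fin d → ℝ, (z ⬝ᵥ z) *
      ((z ⬝ᵥ z) ^ ((q / 2 - 1) * ((d : ℝ) / 2)) * exp (-(1/2) * (z ⬝ᵥ z) ^ (q / 2))) =
      (2 * π) ^ ((d : ℝ) / 2) * (2 / q) * (2 ^ (2 / q) * Gamma (d / 2 + 2 / q) / Gamma (d / 2)) := by
  have : NeZero d := ⟨by omega⟩
  have hd' : (0 : ℝ) < d := by positivity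
  set F : ℝ → ℝ := fun y => y ^ 2 * ((y ^ 2) ^ ((q / 2 - 1) * ((d : ℝ) / 2)) *
    exp (-(1/2) * (y ^ 2) ^ (q / 2))) with hF
  have hn : ∀ z : Fin d → ℝ, z ⬝ᵥ z = ‖WithLp.toLp 2 z‖ ^ 2 := by
    intro z
    rw [EuclideanSpace.real_norm_sq_eq]
    simp [dotProduct, pow_two]
  have hFz : (fun z : Fin d → ℝ => (z ⬝ᵥ z) *
      ((z ⬝ᵥ z) ^ ((q / 2 - 1) * ((d : ℝ) / 2)) * exp (-(1/2) * (z ⬝ᵥ z) ^ (q / 2)))) =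
      fun z => F ‖WithLp.toLp 2 z‖ := by
    ext z; rw [hn]
  have hfr : Module.finrank ℝ (EuclideanSpace ℝ (Fin d)) = d := by simp
  have hy : ∀ y ∈ Set.Ioi (0 : ℝ), y ^ (d - 1) • F y =
      y ^ (q * d / 2 + 1) * exp (-(1 / 2) * y ^ q) := by
    intro y hy
    have hy : 0 < y := hy
    rw [hF, smul_eq_mul]
    dsimp only
    rw [← rpow_natCast y 2, ← rpow_natCast y (d - 1), ← rpow_mul hy.le, ← rpow_mul hy.le,
      ← mul_assoc, ← mul_assoc, ← rpow_add hy, ← rpow_add hy]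
    congr 2
    · push_cast [Nat.cast_sub hd]; ring_nf
    · push_cast; ring_nf
  have hs : -1 < q * d / 2 + 1 := by
    have : 0 < q * d / 2 := by positivity
    linarith
  rw [hFz]
  constructor
  · have h1 : Integrable (fun x : EuclideanSpace ℝ (Fin d) => F ‖x‖) := by
      rw [integrable_fun_norm_addHaar, hfr, integrableOn_congr_fun hy measurableSet_Ioi]
      exact integrableOn_rpow_mul_exp_neg_mul_rpow hs hq (by norm_num)
    exact ((PiLp.volume_preserving_toLp (Fin d)).integrable_comp_emb
      (MeasurableEquiv.toLp 2 _).measurableEmbedding).2 h1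
  · have h0 := (PiLp.volume_preserving_toLp (Fin d)).integral_comp
      (MeasurableEquiv.toLp 2 _).measurableEmbedding
      (fun x : EuclideanSpace ℝ (Fin d) => F ‖x‖)
    refine h0.trans ?_
    rw [integral_fun_norm_addHaar, hfr, setIntegral_congr_fun measurableSet_Ioi hy,
      integral_rpow_mul_exp_neg_mul_rpow hq hs (by norm_num), measureReal_def,
      EuclideanSpace.volume_ball]
    have hG : 0 < Gamma ((d : ℝ) / 2) := Gamma_pos_of_pos (by positivity)
    have hG1 : Gamma ((d : ℝ) / 2 + 1) = d / 2 * Gamma ((d : ℝ) / 2) :=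
      Gamma_add_one (by positivity)
    have e1 : (q * d / 2 + 1 + 1) / q = d / 2 + 2 / q := by field_simp; ring
    have e2 : -(q * d / 2 + 1 + 1) / q = -(d / 2 + 2 / q) := by rw [neg_div, e1]
    have e3 : (1 / 2 : ℝ) ^ (-((d : ℝ) / 2 + 2 / q)) = 2 ^ ((d : ℝ) / 2) * 2 ^ (2 / q) := by
      rw [one_div, inv_rpow (by norm_num), ← rpow_neg (by norm_num), neg_neg,
        rpow_add (by norm_num)]
    have e4 : √π ^ d = π ^ ((d : ℝ) / 2) := by
      rw [sqrt_eq_rpow, ← rpow_natCast, ← rpow_mul pi_pos.le]; ring_nf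
    rw [e1, e2, e3]
    simp only [ENNReal.ofReal_one, one_pow, one_mul, Fintype.card_fin, nsmul_eq_mul, smul_eq_mul]
    rw [ENNReal.toReal_ofReal (by positivity), hG1, e4, mul_rpow (by norm_num) pi_pos.le]
    field_simp

open scoped MatrixOrder Matrix.Norms.L2Operator in
lemma qed_sqrt {d : ℕ} (C : Matrix (Fin d) (Fin d) ℝ) (hC : C.PosDef) :
    ∃ A : Matrix (Fin d) (Fin d) ℝ, C = A * Aᵀ := by
  obtain ⟨B, hB⟩ := CStarAlgebra.nonneg_iff_eq_star_mul_self.mp hC.posSemidef.nonneg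
  exact ⟨Bᵀ, by rw [hB]; simp [star_eq_conjTranspose, conjTranspose_eq_transpose_of_trivial]⟩

/-- If `u` has the multivariate q-exponential density `q-ED_d(μ, C)`, then the
covariance matrix of `u` equals `(2^{2/q} Γ(d/2 + 2/q) / (d Γ(d/2))) · C`. -/
theorem qED_covariance
    (d : ℕ) (hd : 1 ≤ d) (q : ℝ) (hq : 0 < q)
    (μ : Fin d → ℝ) (C : Matrix (Fin d) (Fin d) ℝ) (hC : C.PosDef) :
    ∀ i j : Fin d,
      ∫ u : Fin d → ℝ,
        (u i - μ i) * (u j - μ j) *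
          (q / 2 * (2 * Real.pi) ^ (-(d : ℝ) / 2) * C.det ^ (-(1 : ℝ) / 2) *
            ((u - μ) ⬝ᵥ (C⁻¹ *ᵥ (u - μ))) ^ ((q / 2 - 1) * ((d : ℝ) / 2)) *
            Real.exp (-(1 / 2) * ((u - μ) ⬝ᵥ (C⁻¹ *ᵥ (u - μ))) ^ (q / 2))) =
        2 ^ ((2 : ℝ) / q) * Real.Gamma ((d : ℝ) / 2 + 2 / q) /
          ((d : ℝ) * Real.Gamma ((d : ℝ) / 2)) * C i j := by
  intro i j
  obtain ⟨A, hA⟩ : ∃ A : Matrix (Fin d) (Fin d) ℝ, C = A * Aᵀ := qed_sqrt C hC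
  have hCd := hC.det_pos
  have hCA : C.det = A.det ^ 2 := by rw [hA, det_mul, det_transpose, pow_two]
  have hAd : A.det ≠ 0 := by
    intro h0; rw [hCA, h0] at hCd; simp at hCd
  have hAu : IsUnit A.det := hAd.isUnit
  have hr : ∀ z : Fin d → ℝ, (A *ᵥ z) ⬝ᵥ (C⁻¹ *ᵥ (A *ᵥ z)) = z ⬝ᵥ z := by
    intro z
    have hAtu : IsUnit Aᵀ.det := by rwa [det_transpose]
    rw [hA, Matrix.mul_inv_rev, mulVec_mulVec, Matrix.mul_assoc, nonsing_inv_mul _ hAu,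
      Matrix.mul_one, dotProduct_mulVec, ← vecMul_transpose, vecMul_vecMul,
      mul_nonsing_inv _ hAtu, vecMul_one]
  set h : ℝ → ℝ := fun r => r ^ ((q / 2 - 1) * ((d : ℝ) / 2)) * exp (-(1/2) * r ^ (q / 2)) with hh
  have hm : Measurable h := by rw [hh]; fun_prop
  set c : ℝ := q / 2 * (2 * Real.pi) ^ (-(d : ℝ) / 2) * C.det ^ (-(1 : ℝ) / 2) with hc
  obtain ⟨hint, hval⟩ := qed_rad hd q hq
  have hiso := qed_iso h hm hint
  let f : (Fin d → ℝ) → ℝ := fun v => v i * v j * (c * h (v ⬝ᵥ (C⁻¹ *ᵥ v)))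
  have s1 : ∫ u : Fin d → ℝ,
        (u i - μ i) * (u j - μ j) * (c *
            ((u - μ) ⬝ᵥ (C⁻¹ *ᵥ (u - μ))) ^ ((q / 2 - 1) * ((d : ℝ) / 2)) *
            Real.exp (-(1 / 2) * ((u - μ) ⬝ᵥ (C⁻¹ *ᵥ (u - μ))) ^ (q / 2))) = ∫ v, f v := by
    rw [← integral_sub_right_eq_self f μ]
    congr 1; ext u
    simp only [f, hh, Pi.sub_apply]
    ring
  rw [s1]
  have s2 := qed_cov A hAd f
  have s3 : ∫ z, f (A *ᵥ z) = c * (C i j * (1 / (d : ℝ) * ∫ z : Fin d → ℝ, (z ⬝ᵥ z) * h (z ⬝ᵥ z))) := by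
    calc _ = ∫ z : Fin d → ℝ, ∑ k, ∑ l, c * (A i k * A j l) * (z k * z l * h (z ⬝ᵥ z)) := by
          congr 1; ext z
          simp only [f, hr]
          simp only [mulVec, dotProduct, Finset.sum_mul_sum]
          rw [Finset.sum_mul]
          refine Finset.sum_congr rfl fun k _ => ?_
          rw [Finset.sum_mul]
          refine Finset.sum_congr rfl fun l _ => ?_
          ring
      _ = _ := by
          rw [integral_finsetSum _ (fun k _ => integrable_finsetSum _ fun l _ =>
            ((hiso k l).1.const_mul _))]
          simp_rw [integral_finsetSum _ (fun l _ => ((hiso _ l).1.const_mul _)),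
            integral_const_mul, (hiso _ _).2]
          simp only [mul_ite, mul_zero, Finset.sum_ite_eq, Finset.mem_univ, if_true]
          rw [hA, Matrix.mul_apply, Finset.sum_mul, Finset.mul_sum]
          refine Finset.sum_congr rfl fun k _ => ?_
          rw [transpose_apply]; ring
  have hAa : 0 < |A.det| := abs_pos.2 hAd
  have s4 : ∫ u, f u = |A.det| * ∫ z, f (A *ᵥ z) := by
    rw [s2]; field_simp
  have e1 : C.det ^ (-(1 : ℝ) / 2) = |A.det|⁻¹ := by
    rw [hCA, ← sq_abs, neg_div, rpow_neg (by positivity), ← sqrt_eq_rpow, sqrt_sq hAa.le]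
  have e2 : (2 * π) ^ (-(d : ℝ) / 2) = ((2 * π) ^ ((d : ℝ) / 2))⁻¹ := by
    rw [neg_div, rpow_neg (by positivity)]
  have hP : 0 < (2 * π) ^ ((d : ℝ) / 2) := by positivity
  have hd' : (0 : ℝ) < d := by exact_mod_cast hd
  have hG : 0 < Gamma ((d : ℝ) / 2) := Gamma_pos_of_pos (by positivity)
  rw [s4, s3, hval, hc, e1, e2]
  field_simp
end

section
/- Let p be a probability density on (0, ∞), and for each dimension n define the density generator g_n(r) = ∫_0^∞ (s/(2π))^{n/2} exp{−rs/2} p(s) ds. Then the corresponding family of elliptic densities is marginally consistent: for every d ≥ 2 and every symmetric positive definite C ∈ ℝ^{d×d}, writing u = (u₁, u_d) with u₁ ∈ ℝ^{d−1} and C₁₁ ∈ ℝ^{(d−1)×(d−1)} the leading principal submatrix of C, one has ∫_ℝ det(C)^{−1/2} g_d(uᵀ C^{−1} u) du_d = det(C₁₁)^{−1/2} g_{d−1}(u₁ᵀ C₁₁^{−1} u₁) for all u₁ ∈ ℝ^{d−1}. -/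
open Real MeasureTheory Matrix

lemma kano_integrable (p : ℝ → ℝ) (hp_meas : Measurable p)
    (hint : IntegrableOn p (Set.Ioi 0)) (n : ℕ) (r : ℝ) (hr : 0 < r) :
    IntegrableOn (fun s : ℝ => (s / (2 * Real.pi)) ^ ((n : ℝ) / 2) *
        Real.exp (-(r * s) / 2) * p s) (Set.Ioi 0) := by
  have hpi := Real.pi_pos
  refine Integrable.bdd_mul (c := 1 + n.factorial * (1 / (π * r)) ^ n) hint ?_ ?_
  · exact Measurable.aestronglyMeasurable (by fun_prop)
  · filter_upwards [ae_restrict_mem measurableSet_Ioi] with s hs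
    have hs : 0 < s := hs
    have hx : 0 < s / (2 * π) := by positivity
    rw [Real.norm_of_nonneg (by positivity)]
    have h1 : (s / (2 * π)) ^ ((n : ℝ) / 2) ≤ 1 + (s / (2 * π)) ^ n := by
      rcases le_total (s / (2 * π)) 1 with h | h
      · have := Real.rpow_le_one hx.le h (z := (n : ℝ) / 2) (by positivity)
        have : 0 < (s / (2 * π)) ^ n := by positivity
        linarith
      · have h2 : (s / (2 * π)) ^ ((n : ℝ) / 2) ≤ (s / (2 * π)) ^ (n : ℝ) :=
          Real.rpow_le_rpow_of_exponent_le h (by have : (0:ℝ) ≤ n := by positivity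
                                                 linarith)
        rw [Real.rpow_natCast] at h2
        linarith
    have h3 := Real.pow_div_factorial_le_exp (r * s / 2) (by positivity) n
    have hf : (0 : ℝ) < n.factorial := by positivity
    rw [div_le_iff₀ hf] at h3
    have h4 : (s / (2 * π)) ^ n = (1 / (π * r)) ^ n * (r * s / 2) ^ n := by
      rw [← mul_pow]; congr 1; field_simp
    have h5 : Real.exp (-(r * s) / 2) * Real.exp (r * s / 2) = 1 := by
      rw [← Real.exp_add]; ring_nf; simp
    have h6 : Real.exp (-(r * s) / 2) ≤ 1 := by
      rw [Real.exp_le_one_iff]; have := mul_pos hr hs; linarith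
    calc _ ≤ (1 + (1 / (π * r)) ^ n * (Real.exp (r * s / 2) * n.factorial))
          * Real.exp (-(r * s) / 2) := by
          gcongr
          refine h1.trans ?_
          rw [h4]; gcongr
      _ = Real.exp (-(r * s) / 2) + (1 / (π * r)) ^ n * n.factorial *
          (Real.exp (-(r * s) / 2) * Real.exp (r * s / 2)) := by ring
      _ ≤ _ := by rw [h5]; linarith

lemma kano_gauss (a q σ μ s : ℝ) (hσ : 0 < σ) (hs : 0 < s) (c : ℝ) (hc : 0 ≤ c) :
    ∫⁻ t : ℝ, ENNReal.ofReal ((s / (2 * π)) ^ (a + 1 / 2) *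
        Real.exp (-((q + (t - μ) ^ 2 / σ) * s) / 2) * c) =
      ENNReal.ofReal (√σ * ((s / (2 * π)) ^ a * Real.exp (-(q * s) / 2) * c)) := by
  have hpi := Real.pi_pos
  have hx : 0 < s / (2 * π) := by positivity
  have hb : 0 < s / (2 * σ) := by positivity
  have e : ∀ t : ℝ, (s / (2 * π)) ^ (a + 1 / 2) *
        Real.exp (-((q + (t - μ) ^ 2 / σ) * s) / 2) * c =
      ((s / (2 * π)) ^ (a + 1 / 2) * Real.exp (-(q * s) / 2) * c) *
        Real.exp (-(s / (2 * σ)) * (t - μ) ^ 2) := by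
    intro t
    have : -((q + (t - μ) ^ 2 / σ) * s) / 2 =
      -(q * s) / 2 + -(s / (2 * σ)) * (t - μ) ^ 2 := by field_simp; ring
    rw [this, Real.exp_add]; ring
  simp_rw [e]
  rw [← ofReal_integral_eq_lintegral_ofReal]
  · congr 1
    rw [integral_const_mul, integral_sub_right_eq_self (fun t => Real.exp (-(s / (2 * σ)) * t ^ 2)) μ,
      integral_gaussian, Real.rpow_add hx, ← Real.sqrt_eq_rpow]
    have : √(s / (2 * π)) * √(π / (s / (2 * σ))) = √σ := by
      rw [← Real.sqrt_mul hx.le]; congr 1; field_simp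
    rw [← this]; ring
  · exact ((integrable_exp_neg_mul_sq hb).comp_sub_right μ).const_mul _
  · exact Filter.Eventually.of_forall fun t => by positivity

lemma kano_aux (p : ℝ → ℝ) (hp_meas : Measurable p) (hp_nonneg : ∀ s : ℝ, 0 < s → 0 ≤ p s)
    (hint : IntegrableOn p (Set.Ioi 0)) (m : ℕ) (q σ μ : ℝ) (hq : 0 ≤ q) (hσ : 0 < σ) :
    ∫ t : ℝ, ∫ s in Set.Ioi (0 : ℝ), (s / (2 * Real.pi)) ^ (((m + 1 : ℕ) : ℝ) / 2) *
        Real.exp (-((q + (t - μ) ^ 2 / σ) * s) / 2) * p s =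
    √σ * ∫ s in Set.Ioi (0 : ℝ), (s / (2 * Real.pi)) ^ ((m : ℝ) / 2) *
        Real.exp (-(q * s) / 2) * p s := by
  have hpi := Real.pi_pos
  have nn : ∀ (a r : ℝ), ∀ᵐ s ∂(volume.restrict (Set.Ioi (0 : ℝ))),
      0 ≤ (s / (2 * Real.pi)) ^ a * Real.exp (-(r * s) / 2) * p s := by
    intro a r
    filter_upwards [ae_restrict_mem measurableSet_Ioi] with s hs
    have hs : 0 < s := hs
    have := hp_nonneg s hs
    positivity
  rw [← integral_const_mul, integral_eq_lintegral_of_nonneg_ae, integral_eq_lintegral_of_nonneg_ae]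
  rotate_left
  · filter_upwards [nn (m / 2) q] with s hs
    exact mul_nonneg (Real.sqrt_nonneg _) hs
  · exact Measurable.aestronglyMeasurable (by fun_prop)
  · exact Filter.Eventually.of_forall fun t => integral_nonneg_of_ae (nn _ _)
  · apply StronglyMeasurable.aestronglyMeasurable
    apply StronglyMeasurable.integral_prod_right'
      (f := fun z : ℝ × ℝ => (z.2 / (2 * Real.pi)) ^ (((m + 1 : ℕ) : ℝ) / 2) *
        Real.exp (-((q + (z.1 - μ) ^ 2 / σ) * z.2) / 2) * p z.2)
    exact Measurable.stronglyMeasurable (by fun_prop)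
  congr 1
  have h1 : ∀ᵐ t : ℝ, ENNReal.ofReal (∫ s in Set.Ioi (0 : ℝ),
        (s / (2 * Real.pi)) ^ (((m + 1 : ℕ) : ℝ) / 2) *
        Real.exp (-((q + (t - μ) ^ 2 / σ) * s) / 2) * p s) =
      ∫⁻ s in Set.Ioi (0 : ℝ), ENNReal.ofReal
        ((s / (2 * Real.pi)) ^ (((m + 1 : ℕ) : ℝ) / 2) *
        Real.exp (-((q + (t - μ) ^ 2 / σ) * s) / 2) * p s) := by
    filter_upwards [Measure.ae_ne volume μ] with t ht
    apply ofReal_integral_eq_lintegral_ofReal _ (nn _ _)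
    apply kano_integrable p hp_meas hint
    have : 0 < (t - μ) ^ 2 := by have := sub_ne_zero.2 ht; positivity
    positivity
  rw [lintegral_congr_ae h1, lintegral_lintegral_swap (Measurable.aemeasurable (by
    unfold Function.uncurry; fun_prop))]
  apply lintegral_congr_ae
  filter_upwards [ae_restrict_mem measurableSet_Ioi] with s hs
  rw [← kano_gauss _ q σ μ s hσ hs _ (hp_nonneg s hs)]
  congr! 6
  push_cast; ring

lemma kano_matrix (m : ℕ) (C : Matrix (Fin (m + 1)) (Fin (m + 1)) ℝ) (hC : C.PosDef)
    (u : Fin m → ℝ) : ∃ σ μ : ℝ, 0 < σ ∧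
      C.det = (C.submatrix Fin.castSucc Fin.castSucc).det * σ ∧
      0 < (C.submatrix Fin.castSucc Fin.castSucc).det ∧
      0 ≤ u ⬝ᵥ ((C.submatrix Fin.castSucc Fin.castSucc)⁻¹ *ᵥ u) ∧
      ∀ t : ℝ, (Fin.snoc u t : Fin (m + 1) → ℝ) ⬝ᵥ (C⁻¹ *ᵥ Fin.snoc u t) =
        u ⬝ᵥ ((C.submatrix Fin.castSucc Fin.castSucc)⁻¹ *ᵥ u) + (t - μ) ^ 2 / σ := by
  set A := C.submatrix Fin.castSucc Fin.castSucc with hA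
  have hAp : A.PosDef := hC.submatrix (Fin.castSucc_injective m)
  have hAd := hAp.det_pos
  have hCd := hC.det_pos
  have hAu : IsUnit A.det := hAd.ne'.isUnit
  have hCu : IsUnit C.det := hCd.ne'.isUnit
  let b : Fin m → ℝ := fun i => C i.castSucc (Fin.last m)
  let c : ℝ := C (Fin.last m) (Fin.last m)
  have hsym : ∀ i j, C i j = C j i := fun i j => by
    have := hC.isHermitian.apply i j
    simpa using this.symm
  have hAsym : (A⁻¹)ᵀ = A⁻¹ := by
    rw [Matrix.transpose_nonsing_inv]
    congr 1
    ext i j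
    exact hsym _ _
  have hAinv : ∀ v w : Fin m → ℝ, v ⬝ᵥ (A⁻¹ *ᵥ w) = w ⬝ᵥ (A⁻¹ *ᵥ v) := by
    intro v w
    rw [Matrix.dotProduct_mulVec, ← Matrix.mulVec_transpose, hAsym, dotProduct_comm]
  have hdet : C.det = A.det * (c - b ⬝ᵥ (A⁻¹ *ᵥ b)) := by
    rw [← Matrix.det_submatrix_equiv_self (finSumFinEquiv : Fin m ⊕ Fin 1 ≃ Fin (m + 1)) C]
    rw [← Matrix.fromBlocks_toBlocks (C.submatrix finSumFinEquiv finSumFinEquiv)]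
    have e1 : (C.submatrix (finSumFinEquiv : Fin m ⊕ Fin 1 ≃ Fin (m + 1))
      finSumFinEquiv).toBlocks₁₁ = A := by
      ext i j; rfl
    haveI := A.invertibleOfIsUnitDet hAu
    rw [e1, Matrix.det_fromBlocks₁₁, Matrix.det_unique (n := Fin 1)]
    congr 1
    rw [Matrix.invOf_eq_nonsing_inv, Matrix.mul_assoc]
    have e2 : ∀ i, (C.submatrix (finSumFinEquiv : Fin m ⊕ Fin 1 ≃ Fin (m + 1))
      finSumFinEquiv).toBlocks₂₁ default i = b i := fun i => hsym _ _
    have e3 : ∀ i, (C.submatrix (finSumFinEquiv : Fin m ⊕ Fin 1 ≃ Fin (m + 1))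
      finSumFinEquiv).toBlocks₁₂ i default = b i := fun i => rfl
    rw [Matrix.sub_apply]
    congr 1
    simp only [Matrix.mul_apply, dotProduct, Matrix.mulVec, e2, e3]
  set σ := c - b ⬝ᵥ (A⁻¹ *ᵥ b) with hσd
  have hσ : 0 < σ := by
    rw [hdet] at hCd
    exact pos_of_mul_pos_right hCd hAd.le
  refine ⟨σ, b ⬝ᵥ (A⁻¹ *ᵥ u), hσ, hdet, hAd, ?_, ?_⟩
  · have := hAp.inv.posSemidef.dotProduct_mulVec_nonneg u
    simpa using this
  intro t
  set x : Fin (m + 1) → ℝ := Fin.snoc u t with hx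
  set y := C⁻¹ *ᵥ x with hy
  have hCy : C *ᵥ y = x := by
    rw [hy, Matrix.mulVec_mulVec, Matrix.mul_nonsing_inv _ hCu, Matrix.one_mulVec]
  set y1 : Fin m → ℝ := fun i => y i.castSucc with hy1
  set τ := y (Fin.last m) with hτ
  have E1 : A *ᵥ y1 + τ • b = u := by
    ext i
    have := congrFun hCy i.castSucc
    simp only [Matrix.mulVec, dotProduct, Fin.sum_univ_castSucc, hx, Fin.snoc_castSucc] at this
    rw [← this]
    simp [Matrix.mulVec, dotProduct, A, y1, b, τ, mul_comm]
  have E2 : b ⬝ᵥ y1 + c * τ = t := by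
    have := congrFun hCy (Fin.last m)
    simp only [Matrix.mulVec, dotProduct, Fin.sum_univ_castSucc, hx, Fin.snoc_last] at this
    rw [← this]
    simp [dotProduct, y1, b, τ, c, hsym (Fin.last m)]
  have E3 : y1 = A⁻¹ *ᵥ u - τ • (A⁻¹ *ᵥ b) := by
    rw [← E1, Matrix.mulVec_add, Matrix.mulVec_mulVec, Matrix.nonsing_inv_mul _ hAu,
      Matrix.one_mulVec, Matrix.mulVec_smul]
    simp
  have E4 : x ⬝ᵥ y = u ⬝ᵥ y1 + t * τ := by
    simp [dotProduct, Fin.sum_univ_castSucc, hx, y1, τ]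
  rw [E3, dotProduct_sub, dotProduct_smul, smul_eq_mul] at E2 E4
  rw [hAinv u b] at E4
  rw [E4]
  have E5 : t - b ⬝ᵥ (A⁻¹ *ᵥ u) = σ * τ := by rw [hσd, ← E2]; ring
  have E6 : t = b ⬝ᵥ (A⁻¹ *ᵥ u) + σ * τ := by linarith
  rw [E5, E6]
  field_simp
  ring

/-- Kano's sufficiency: if the density generator in dimension `n` is the scale mixture
of Gaussians `g_n(r) = ∫₀^∞ (s/(2π))^{n/2} exp(−rs/2) p(s) ds` for a mixing probability
density `p` on (0,∞) independent of the dimension, then the resulting family of elliptic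
densities is marginally consistent: integrating out the last coordinate of the
`d`-dimensional density gives the `(d−1)`-dimensional density with the leading principal
submatrix of `C`. -/
theorem kano_mixture_elliptic_consistency
    (p : ℝ → ℝ) (hp_meas : Measurable p) (hp_nonneg : ∀ s : ℝ, 0 < s → 0 ≤ p s)
    (hp_prob : ∫ s in Set.Ioi (0 : ℝ), p s = 1)
    (g : ℕ → ℝ → ℝ)
    (hg : ∀ (n : ℕ) (r : ℝ),
      g n r = ∫ s in Set.Ioi (0 : ℝ), (s / (2 * Real.pi)) ^ ((n : ℝ) / 2) *
        Real.exp (-(r * s) / 2) * p s)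
    (m : ℕ) (hm : 1 ≤ m)
    (C : Matrix (Fin (m + 1)) (Fin (m + 1)) ℝ) (hC : C.PosDef) :
    ∀ u₁ : Fin m → ℝ,
      ∫ t : ℝ,
        C.det ^ (-(1 : ℝ) / 2) *
          g (m + 1) (Fin.snoc u₁ t ⬝ᵥ (C⁻¹ *ᵥ Fin.snoc u₁ t)) =
        (C.submatrix Fin.castSucc Fin.castSucc).det ^ (-(1 : ℝ) / 2) *
          g m (u₁ ⬝ᵥ ((C.submatrix Fin.castSucc Fin.castSucc)⁻¹ *ᵥ u₁)) := by
  intro u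
  have hint : IntegrableOn p (Set.Ioi 0) := by
    by_contra h
    rw [integral_undef h] at hp_prob
    exact zero_ne_one hp_prob
  obtain ⟨σ, μ, hσ, hdet, hA, hq, hQ⟩ := kano_matrix m C hC u
  simp_rw [hQ]
  rw [integral_const_mul]
  simp_rw [hg]
  rw [kano_aux p hp_meas hp_nonneg hint m _ σ μ hq hσ, hdet, Real.mul_rpow hA.le hσ.le, ← mul_assoc]
  congr 1
  rw [mul_assoc, Real.sqrt_eq_rpow, ← Real.rpow_add hσ]
  norm_num
end

section
/- Let d ≥ 1, q > 0, and let C ∈ ℝ^{d×d} be symmetric positive definite with Cholesky factor L (so C = L Lᵀ). Let S be uniformly distributed on the unit sphere S^{d−1} ⊂ ℝ^d, let V be an independent random variable with the Gamma(d/2, 1/2) (chi-squared with d degrees of freedom) distribution, and set R = V^{1/q}. Then the random vector u = R·L·S has the multivariate q-exponential density p_d(u; 0, C, q) = (q/2)(2π)^{−d/2} det(C)^{−1/2} r(u)^{(q/2−1)(d/2)} exp{−(1/2) r(u)^{q/2}} with r(u) = uᵀ C^{−1} u; equivalently, the pushforward of the product of the uniform probability measure on the unit sphere and the Gamma(d/2,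 1/2) measure under the map (s, v) ↦ v^{1/q} L s equals the probability measure on ℝ^d with density p_d(·; 0, C, q). -/
open Real MeasureTheory Matrix ProbabilityTheory

/-- The multivariate q-exponential density `q-ED(0, C)` on `ℝ^d`. -/
noncomputable def qEDdensity {n : Type*} [Fintype n] [DecidableEq n]
    (q : ℝ) (μ : n → ℝ) (C : Matrix n n ℝ) (u : n → ℝ) : ℝ :=
  q / 2 * (2 * Real.pi) ^ (-(Fintype.card n : ℝ) / 2) * C.det ^ (-(1 : ℝ) / 2) *
    ((u - μ) ⬝ᵥ (C⁻¹ *ᵥ (u - μ))) ^ ((q / 2 - 1) * ((Fintype.card n : ℝ) / 2)) *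
    Real.exp (-(1 / 2) * ((u - μ) ⬝ᵥ (C⁻¹ *ᵥ (u - μ))) ^ (q / 2))

/-- The uniform probability measure on the unit sphere of `ℝ^d`
(the normalized spherical measure). -/
noncomputable def uniformSphere (d : ℕ) :
    Measure (Metric.sphere (0 : EuclideanSpace ℝ (Fin d)) 1) :=
  ((volume : Measure (EuclideanSpace ℝ (Fin d))).toSphere Set.univ)⁻¹ •
    (volume : Measure (EuclideanSpace ℝ (Fin d))).toSphere

open Set

lemma polar_lintegral {E : Type*} [NormedAddCommGroup E] [NormedSpace ℝ E] [MeasurableSpace E]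
    [BorelSpace E] [FiniteDimensional ℝ E] [Nontrivial E] (μ : Measure E) [μ.IsAddHaarMeasure]
    (F : E → ENNReal) (hF : Measurable F) :
    ∫⁻ x, F x ∂μ = ∫⁻ s, ∫⁻ r in Ioi (0:ℝ),
      ENNReal.ofReal (r ^ (Module.finrank ℝ E - 1)) * F (r • (s : E)) ∂volume ∂μ.toSphere := by
  have hmp := (μ.measurePreserving_homeomorphUnitSphereProd).symm
    ((homeomorphUnitSphereProd E).toMeasurableEquiv)
  have h1 : ∫⁻ x, F x ∂μ = ∫⁻ x : ({(0)}ᶜ : Set E), F x.1 ∂(μ.comap (↑)) := by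
    rw [lintegral_subtype_comap (measurableSet_singleton _).compl F,
        restrict_compl_singleton]
  rw [h1, ← hmp.lintegral_comp (f := fun x : ({(0)}ᶜ : Set E) => F x.1) (by fun_prop)]
  have hm : Measurable fun p : Metric.sphere (0:E) 1 × Ioi (0:ℝ) =>
      F ((p.2 : ℝ) • (p.1 : E)) := by fun_prop
  calc _ = ∫⁻ p, F ((p.2 : ℝ) • (p.1 : E))
        ∂(μ.toSphere.prod (Measure.volumeIoiPow (Module.finrank ℝ E - 1))) := by
        apply lintegral_congr
        intro p
        congr 1
    _ = _ := by
        rw [lintegral_prod _ hm.aemeasurable]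
        apply lintegral_congr
        intro s
        simp only
        rw [Measure.volumeIoiPow, lintegral_withDensity_eq_lintegral_mul _ (by fun_prop)
          (by fun_prop)]
        exact lintegral_subtype_comap measurableSet_Ioi
          (fun r : ℝ => ENNReal.ofReal (r ^ (Module.finrank ℝ E - 1)) * F (r • (s : E)))

lemma gamma_lintegral (a q : ℝ) (hq : 0 < q) (g : ℝ → ENNReal) (hg : Measurable g) :
    ∫⁻ v, g v ∂(gammaMeasure a (1/2)) = ∫⁻ r in Ioi (0:ℝ),
      ENNReal.ofReal (q * r ^ (q - 1)) * (gammaPDF a (1/2) (r ^ q) * g (r ^ q)) := by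
  have hmeas : Measurable (gammaPDF a (1/2)) := (measurable_gammaPDFReal a (1/2)).ennreal_ofReal
  rw [gammaMeasure, lintegral_withDensity_eq_lintegral_mul _ hmeas hg]
  have h0 : ∫⁻ v, (gammaPDF a (1/2) * g) v = ∫⁻ v in Ioi (0:ℝ), (gammaPDF a (1/2) * g) v := by
    rw [← setLIntegral_congr Ioi_ae_eq_Ici.symm, setLIntegral_eq_of_support_subset]
    intro v hv
    by_contra h
    apply hv
    simp only [mem_Ici, not_le] at h
    simp [gammaPDF_of_neg h]
  have him : (fun r : ℝ => r ^ q) '' Ioi 0 = Ioi 0 := by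
    ext v
    constructor
    · rintro ⟨r, hr, rfl⟩
      exact Real.rpow_pos_of_pos hr q
    · intro hv
      exact ⟨v ^ q⁻¹, Real.rpow_pos_of_pos hv _, Real.rpow_inv_rpow (le_of_lt hv) hq.ne'⟩
  rw [h0]
  conv_lhs => rw [← him]
  rw [lintegral_image_eq_lintegral_abs_deriv_mul measurableSet_Ioi
    (f' := fun r => q * r ^ (q - 1))]
  · apply setLIntegral_congr_fun measurableSet_Ioi
    intro r hr
    have : 0 < q * r ^ (q - 1) := mul_pos hq (Real.rpow_pos_of_pos hr _)
    simp [abs_of_pos this]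
  · intro x hx
    exact (Real.hasDerivAt_rpow_const (Or.inl (ne_of_gt hx))).hasDerivWithinAt
  · intro x hx y hy h
    exact Real.rpow_left_injOn hq.ne' (show (0:ℝ) ≤ x from le_of_lt hx)
      (show (0:ℝ) ≤ y from le_of_lt hy) h

noncomputable def kRad (d : ℕ) (q r : ℝ) : ℝ :=
  q / 2 * (2 * Real.pi) ^ (-(d : ℝ) / 2) * r ^ ((q / 2 - 1) * (d : ℝ)) *
    Real.exp (-(1 / 2) * r ^ q)

lemma sphere_area (d : ℕ) (hd : 1 ≤ d) :
    (volume : Measure (EuclideanSpace ℝ (Fin d))).toSphere univ =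
      ENNReal.ofReal (2 * Real.pi ^ ((d : ℝ) / 2) / Real.Gamma ((d : ℝ) / 2)) := by
  have : Nonempty (Fin d) := ⟨⟨0, hd⟩⟩
  have hd' : (0:ℝ) < d := by exact_mod_cast hd
  rw [Measure.toSphere_apply_univ, EuclideanSpace.volume_ball]
  simp only [finrank_euclideanSpace, Fintype.card_fin, ENNReal.ofReal_one, one_pow, one_mul]
  rw [← ENNReal.ofReal_natCast, ← ENNReal.ofReal_mul hd'.le]
  congr 1
  rw [Real.Gamma_add_one (by positivity), Real.sqrt_eq_rpow, ← Real.rpow_mul_natCast Real.pi_pos.le]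
  have := (Real.Gamma_pos_of_pos (show 0 < (d:ℝ)/2 by positivity)).ne'
  rw [show (1 / 2 * (d:ℝ)) = d / 2 by ring]
  field_simp

lemma scalar_id (d : ℕ) (hd : 1 ≤ d) (q : ℝ) (hq : 0 < q) (r : ℝ) (hr : 0 < r) :
    ((volume : Measure (EuclideanSpace ℝ (Fin d))).toSphere univ)⁻¹ *
      (ENNReal.ofReal (q * r ^ (q - 1)) * gammaPDF ((d:ℝ)/2) (1/2) (r ^ q)) =
      ENNReal.ofReal (r ^ (d - 1)) * ENNReal.ofReal (kRad d q r) := by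
  have hd' : (0:ℝ) < d := by exact_mod_cast hd
  have hG := (Real.Gamma_pos_of_pos (show 0 < (d:ℝ)/2 by positivity))
  have hpi := Real.pi_pos
  rw [sphere_area d hd, ← ENNReal.ofReal_inv_of_pos (by positivity),
    gammaPDF_of_nonneg (by positivity), ← ENNReal.ofReal_mul (by positivity),
    ← ENNReal.ofReal_mul (by positivity), ← ENNReal.ofReal_mul (by positivity)]
  congr 1
  unfold kRad
  have e1 : (r:ℝ) ^ (d - 1) = r ^ ((d:ℝ) - 1) := by
    rw [← Real.rpow_natCast, Nat.cast_sub hd, Nat.cast_one]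
  have e2 : (r ^ q) ^ ((d:ℝ)/2 - 1) = r ^ (q * ((d:ℝ)/2 - 1)) := by
    rw [← Real.rpow_mul hr.le]
  have e3 : r ^ (q - 1) * r ^ (q * ((d:ℝ)/2 - 1)) =
      r ^ ((d:ℝ) - 1) * r ^ ((q / 2 - 1) * (d : ℝ)) := by
    rw [← Real.rpow_add hr, ← Real.rpow_add hr]; congr 1; ring
  have e4 : (2 * Real.pi) ^ (-(d : ℝ) / 2) = ((1/2:ℝ) ^ ((d:ℝ)/2)) * (Real.pi ^ ((d : ℝ) / 2))⁻¹ := by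
    rw [neg_div, Real.rpow_neg (by positivity), Real.mul_rpow (by norm_num) hpi.le, mul_inv,
      one_div, Real.inv_rpow (by norm_num)]
  rw [e1, e2, e4, show -(1/2 * r ^ q) = -(1/2) * r ^ q by ring]
  have hP : 0 < Real.pi ^ ((d : ℝ) / 2) := by positivity
  calc _ = (q / 2 * (1/2:ℝ) ^ ((d:ℝ)/2) * (Real.pi ^ ((d : ℝ) / 2))⁻¹) *
        (r ^ (q - 1) * r ^ (q * ((d:ℝ)/2 - 1))) * Real.exp (-(1/2) * r ^ q) := by
        field_simp
    _ = _ := by rw [e3]; ring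

lemma dens_id (d : ℕ) (q : ℝ)
    (C L : Matrix (Fin d) (Fin d) ℝ) (hC : C.PosDef) (hL : C = L * Lᵀ)
    (y : EuclideanSpace ℝ (Fin d)) :
    qEDdensity q 0 C (L *ᵥ y.ofLp) = |L.det|⁻¹ * kRad d q ‖y‖ := by
  have hdet : C.det = L.det ^ 2 := by rw [hL, det_mul, det_transpose]; ring
  have hL0 : L.det ≠ 0 := by
    intro h
    have := hC.det_pos
    rw [hdet, h] at this
    simp at this
  have hLu : IsUnit L.det := hL0.isUnit
  have hr : (L *ᵥ y.ofLp) ⬝ᵥ (C⁻¹ *ᵥ (L *ᵥ y.ofLp)) = ‖y‖ ^ (2:ℝ) := by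
    have h1 : C⁻¹ *ᵥ (L *ᵥ y.ofLp) = (Lᵀ)⁻¹ *ᵥ y.ofLp := by
      rw [hL, Matrix.mul_inv_rev, mulVec_mulVec, Matrix.mul_assoc, Matrix.nonsing_inv_mul _ hLu,
        Matrix.mul_one]
    rw [h1, ← Matrix.transpose_nonsing_inv, Matrix.mulVec_transpose, dotProduct_comm,
      ← Matrix.dotProduct_mulVec, mulVec_mulVec, Matrix.nonsing_inv_mul _ hLu, one_mulVec,
      Real.rpow_two, EuclideanSpace.real_norm_sq_eq]
    simp [dotProduct, sq]
  unfold qEDdensity kRad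
  simp only [sub_zero, hr, Fintype.card_fin]
  rw [← Real.rpow_mul (norm_nonneg _), ← Real.rpow_mul (norm_nonneg _), hdet]
  have e : (L.det ^ 2) ^ (-(1:ℝ)/2) = |L.det|⁻¹ := by
    rw [← sq_abs, ← Real.rpow_natCast, ← Real.rpow_mul (abs_nonneg _)]
    norm_num
    rw [Real.rpow_neg_one]
  rw [e, show (2 * (q / 2)) = q by ring,
    show 2 * ((q / 2 - 1) * ((d:ℝ) / 2)) = (q/2 - 1) * d by ring]
  ring

theorem qED_stochastic_representation
    (d : ℕ) (hd : 1 ≤ d) (q : ℝ) (hq : 0 < q)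
    (C L : Matrix (Fin d) (Fin d) ℝ) (hC : C.PosDef) (hL : C = L * Lᵀ) :
    Measure.map
        (fun p : Metric.sphere (0 : EuclideanSpace ℝ (Fin d)) 1 × ℝ =>
          fun i : Fin d =>
            p.2 ^ (1 / q) * (L *ᵥ (fun j : Fin d => (p.1 : EuclideanSpace ℝ (Fin d)) j)) i)
        ((uniformSphere d).prod (gammaMeasure ((d : ℝ) / 2) (1 / 2))) =
      volume.withDensity fun u : Fin d → ℝ => ENNReal.ofReal (qEDdensity q 0 C u) := by
  have hd' : (0:ℝ) < d := by exact_mod_cast hd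
  have : Nonempty (Fin d) := ⟨⟨0, hd⟩⟩
  have hdet : C.det = L.det ^ 2 := by rw [hL, det_mul, det_transpose]; ring
  have hL0 : L.det ≠ 0 := by
    intro h
    have := hC.det_pos
    rw [hdet, h] at this
    simp at this
  have : IsProbabilityMeasure (gammaMeasure ((d : ℝ) / 2) (1 / 2)) :=
    isProbabilityMeasure_gammaMeasure (by positivity) (by norm_num)
  have hLm : Measurable fun x : Fin d → ℝ => L *ᵥ x :=
    (Continuous.matrix_mulVec continuous_const continuous_id).measurable
  have hcoe : Measurable fun y : EuclideanSpace ℝ (Fin d) => y.ofLp := by fun_prop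
  have hT : Measurable (fun p : Metric.sphere (0 : EuclideanSpace ℝ (Fin d)) 1 × ℝ =>
          fun i : Fin d =>
            p.2 ^ (1 / q) * (L *ᵥ (fun j : Fin d => (p.1 : EuclideanSpace ℝ (Fin d)) j)) i) := by
    have h2 : Measurable fun p : Metric.sphere (0 : EuclideanSpace ℝ (Fin d)) 1 × ℝ =>
        L *ᵥ (p.1 : EuclideanSpace ℝ (Fin d)).ofLp :=
      hLm.comp (hcoe.comp (measurable_subtype_coe.comp measurable_fst))
    refine measurable_pi_lambda _ fun i => ?_
    exact (measurable_snd.pow_const _).mul ((measurable_pi_apply i).comp h2)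
  have hk : Measurable (kRad d q) := by unfold kRad; fun_prop
  have hdens : Measurable fun u : Fin d → ℝ => ENNReal.ofReal (qEDdensity q 0 C u) := by
    have : Measurable fun u : Fin d → ℝ => u ⬝ᵥ (C⁻¹ *ᵥ u) :=
      (Continuous.dotProduct continuous_id
        (Continuous.matrix_mulVec continuous_const continuous_id)).measurable
    unfold qEDdensity
    simp only [sub_zero]
    fun_prop
  refine Measure.ext_of_lintegral _ fun f hf => ?_
  have hfT := (hf.comp hT).aemeasurable
    (μ := (uniformSphere d).prod (gammaMeasure ((d : ℝ) / 2) (1 / 2)))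
  simp only [Function.comp_def] at hfT
  rw [lintegral_map hf hT, lintegral_prod _ hfT,
    lintegral_withDensity_eq_lintegral_mul _ hdens hf, uniformSphere, lintegral_smul_measure]
  -- right-hand side
  have hmap := Real.map_matrix_volume_pi_eq_smul_volume_pi hL0
  have hvol : (volume : Measure (Fin d → ℝ)) = ENNReal.ofReal |L.det| •
      Measure.map (fun x => L *ᵥ x) volume := by
    have h : (⇑(toLin' L)) = fun x => L *ᵥ x := by ext x; simp
    rw [← h, hmap, smul_smul, ← ENNReal.ofReal_mul (abs_nonneg _), ← abs_mul,
      mul_inv_cancel₀ hL0, abs_one, ENNReal.ofReal_one, one_smul]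
  have hR : ∫⁻ u, ((fun u : Fin d → ℝ => ENNReal.ofReal (qEDdensity q 0 C u)) * f) u =
      ∫⁻ y : EuclideanSpace ℝ (Fin d),
        ENNReal.ofReal (kRad d q ‖y‖) * f (L *ᵥ y.ofLp) := by
    have hm1 := (hdens.mul hf).comp hLm
    have hm2 := hm1.comp hcoe
    simp only [Function.comp_def] at hm1 hm2
    conv_lhs => rw [hvol]
    rw [lintegral_smul_measure, lintegral_map (hdens.mul hf) hLm,
      ← (PiLp.volume_preserving_ofLp (Fin d)).lintegral_comp hm1,
      smul_eq_mul, ← lintegral_const_mul _ hm2]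
    apply lintegral_congr
    intro y
    simp only [Pi.mul_apply]
    rw [dens_id d q C L hC hL, ← mul_assoc, ← ENNReal.ofReal_mul (abs_nonneg _), ← mul_assoc,
      mul_inv_cancel₀ (abs_ne_zero.mpr hL0), one_mul]
  have hFm : Measurable fun y : EuclideanSpace ℝ (Fin d) =>
        ENNReal.ofReal (kRad d q ‖y‖) * f (L *ᵥ y.ofLp) :=
    (hk.comp measurable_norm).ennreal_ofReal.mul (hf.comp (hLm.comp hcoe))
  rw [hR, polar_lintegral _ _ hFm, smul_eq_mul, ← lintegral_const_mul' _ _ ?_]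
  swap
  · rw [sphere_area d hd]
    have := Real.Gamma_pos_of_pos (show 0 < (d:ℝ)/2 by positivity)
    have := Real.pi_pos
    rw [← ENNReal.ofReal_inv_of_pos (by positivity)]
    exact ENNReal.ofReal_ne_top
  apply lintegral_congr
  intro s
  have hgm := (hf.comp hT).comp (measurable_prodMk_left (x := s))
  have hG := gamma_lintegral ((d:ℝ)/2) q hq _ hgm
  simp only [Function.comp_def] at hG
  rw [hG, ← lintegral_const_mul' _ _ ?_]
  swap
  · rw [sphere_area d hd]
    have := Real.Gamma_pos_of_pos (show 0 < (d:ℝ)/2 by positivity)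
    have := Real.pi_pos
    rw [← ENNReal.ofReal_inv_of_pos (by positivity)]
    exact ENNReal.ofReal_ne_top
  apply setLIntegral_congr_fun measurableSet_Ioi
  intro r hr
  have hr0 : (0:ℝ) < r := hr
  have hs : ‖(s : EuclideanSpace ℝ (Fin d))‖ = 1 := by simp
  simp only [finrank_euclideanSpace, Fintype.card_fin]
  rw [norm_smul, hs, mul_one, Real.norm_of_nonneg hr0.le, ← mul_assoc (ENNReal.ofReal (r ^ (d-1))),
    ← scalar_id d hd q hq r hr0, ← mul_assoc (ENNReal.ofReal _), ← mul_assoc]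
  congr 2
  ext i
  rw [one_div, Real.rpow_rpow_inv hr0.le hq.ne', WithLp.ofLp_smul, Matrix.mulVec_smul]
  rfl
end
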